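/- Let ρ be a normalized state (positive semidefinite, trace 1) on ℂ^m ⊗ ℂ^n. Then the minimal eigenvalue of its partial transpose ρ^Γ is at least −1/2, and equality holds if and only if ρ is a two-qubit maximally entangled pure state, i.e., ρ = |ψ⟩⟨ψ| where |ψ⟩ = (|a₀b₀⟩ + |a₁b₁⟩)/√2 for orthonormal pairs a₀⊥a₁ in ℂ^m and b₀⊥b₁ in ℂ^n. -/

import Mathlib

open Matrix
open scoped ComplexOrder

/-- Partial transpose on the second tensor factor. -/
def ptranspose {m n : ℕ} (M : Matrix (Fin m × Fin n) (Fin m × Fin n) ℂ) :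
    Matrix (Fin m × Fin n) (Fin m × Fin n) ℂ :=
  Matrix.of fun p q => M (p.1, q.2) (q.1, p.2)

/-- A product vector in `ℂ^m ⊗ ℂ^n`. -/
def prodVec {m n : ℕ} (a : Fin m → ℂ) (b : Fin n → ℂ) : Fin m × Fin n → ℂ :=
  fun p => a p.1 * b p.2

/-!
Write `ρ = ∑ k, |w k⟩⟨w k|` and let `v` be a unit vector. In terms of the coefficient matrices
`W` of a `w k` and `X` of the entrywise conjugate of `v`, and with `B = W Xᴴ` and `K = B - Bᵀ`,
one has `⟨v|(|w k⟩⟨w k|)^Γ|v⟩ = tr (B B̄)`. Completing squares in the Hilbert-Schmidt norm gives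

  `‖W‖² / 2 + tr (B B̄) = ‖B + Bᵀ‖² / 4 + ‖W - K X‖² / 2 + (‖K‖² - 2 ‖K X‖²) / 4`.

The singular values of the skew-symmetric matrix `K` come in equal pairs, so `2 ‖K x‖² ≤ ‖K‖²` for
every unit vector `x`, and the last term is nonnegative too. Summing over `k` bounds the spectrum
of `ρ^Γ` below by `-1/2`.

In the case of equality every `B` is skew-symmetric and `W = 2 B X`, hence `B = 2 B X Xᴴ`. If
`B ≠ 0`, the range of `Bᴴ` contains orthonormal vectors `e`, `f`, which are fixed by `2 X Xᴴ`.
Since `X Xᴴ` has trace one, its range is spanned by `e` and `f`. Thus `B` is a multiple of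
`ē fᴴ - f̄ eᴴ`, and all the `W = 2 B X` are multiples of one and the same `a₀ b₀ᵀ + a₁ b₁ᵀ`.
-/

section SkewSymmetric

lemma transpose_sub_transpose_self {R m : Type*} [AddGroup R] (B : Matrix m m R) :
    (B - Bᵀ)ᵀ = -(B - Bᵀ) := by
  rw [transpose_sub, transpose_transpose, neg_sub]

variable {R m : Type*} [CommRing R] [Fintype m] {K : Matrix m m R}

lemma dotProduct_skew_mulVec_comm (hK : Kᵀ = -K) (x y : m → R) :
    x ⬝ᵥ K *ᵥ y = -(y ⬝ᵥ K *ᵥ x) := by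
  rw [dotProduct_mulVec, dotProduct_comm, ← mulVec_transpose, hK, neg_mulVec, dotProduct_neg]

lemma dotProduct_skew_mulVec_self [IsAddTorsionFree R] (hK : Kᵀ = -K) (x : m → R) :
    x ⬝ᵥ K *ᵥ x = 0 :=
  self_eq_neg.mp (dotProduct_skew_mulVec_comm hK x x)

end SkewSymmetric

section HilbertSchmidt

variable {R m n : Type*} [CommRing R] [StarRing R] [Fintype m] [Fintype n]

lemma trace_conjTranspose_mul_self_sub (A B : Matrix m n R) :
    ((A - B)ᴴ * (A - B)).trace =
      (Aᴴ * A).trace - (Aᴴ * B).trace - star (Aᴴ * B).trace + (Bᴴ * B).trace := by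
  simp only [← trace_conjTranspose (Aᴴ * B), conjTranspose_mul, conjTranspose_conjTranspose,
    conjTranspose_sub, Matrix.sub_mul, Matrix.mul_sub, trace_sub]
  ring

lemma trace_conjTranspose_transpose_mul (A : Matrix m n R) (B : Matrix n m R) :
    (Aᵀᴴ * B).trace = (Aᴴ * Bᵀ).trace := by
  rw [← trace_transpose, transpose_mul, trace_mul_comm]; rfl

lemma trace_conjTranspose_mul_sub_transpose {K : Matrix m m R} (hK : Kᵀ = -K) (B : Matrix m m R) :
    (Kᴴ * (B - Bᵀ)).trace = 2 * (Kᴴ * B).trace := by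
  rw [Matrix.mul_sub, trace_sub, ← trace_conjTranspose_transpose_mul, hK, conjTranspose_neg,
    Matrix.neg_mul, trace_neg]
  ring

lemma trace_conjTranspose_mul_self_sub_transpose (B : Matrix m m R) :
    ((B - Bᵀ)ᴴ * (B - Bᵀ)).trace = 2 * (Bᴴ * B).trace - 2 * (Bᵀᴴ * B).trace := by
  rw [trace_conjTranspose_mul_sub_transpose (transpose_sub_transpose_self B), conjTranspose_sub,
    Matrix.sub_mul, trace_sub, mul_sub]

lemma trace_conjTranspose_mul_self_add_transpose (B : Matrix m m R) :
    ((B + Bᵀ)ᴴ * (B + Bᵀ)).trace = 2 * (Bᴴ * B).trace + 2 * (Bᵀᴴ * B).trace := by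
  rw [conjTranspose_add, Matrix.add_mul, Matrix.mul_add, Matrix.mul_add, trace_add, trace_add,
    trace_add, trace_conjTranspose_transpose_mul B Bᵀ, transpose_transpose,
    ← trace_conjTranspose_transpose_mul]
  ring

lemma trace_conjTranspose_mul_self_smul_sub_wedge [IsAddTorsionFree R] {K : Matrix m m R}
    (hK : Kᵀ = -K) (x : m → R) :
    let N := star x ⬝ᵥ x
    let Y := vecMulVec (K *ᵥ x) (star x)
    ((N • K - (Y - Yᵀ))ᴴ * (N • K - (Y - Yᵀ))).trace =
      N * (N * (Kᴴ * K).trace - 2 * (star (K *ᵥ x) ⬝ᵥ K *ᵥ x)) := by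
  intro N Y
  set y := K *ᵥ x
  have hN : star N = N := (star_dotProduct x x).symm
  have hy : star (star y ⬝ᵥ y) = star y ⬝ᵥ y := (star_dotProduct y y).symm
  have hKY : (Kᴴ * Y).trace = star y ⬝ᵥ y := by
    rw [mul_vecMulVec, trace_vecMulVec, dotProduct_comm, dotProduct_mulVec, ← star_mulVec]
  have hYY : (Yᴴ * Y).trace = N * (star y ⬝ᵥ y) := by
    rw [conjTranspose_vecMulVec, star_star, vecMulVec_mul_vecMulVec, trace_vecMulVec,
      dotProduct_smul, dotProduct_comm x, smul_eq_mul, mul_comm]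
  have hYtY : (Yᵀᴴ * Y).trace = 0 := by
    rw [transpose_vecMulVec, conjTranspose_vecMulVec, star_star, vecMulVec_mul_vecMulVec,
      dotProduct_skew_mulVec_self hK, zero_smul, vecMulVec_zero, trace_zero]
  rw [trace_conjTranspose_mul_self_sub, trace_conjTranspose_mul_self_sub_transpose]
  simp only [conjTranspose_smul, Matrix.smul_mul, Matrix.mul_smul, trace_smul, smul_eq_mul,
    star_mul', hN, trace_conjTranspose_mul_sub_transpose hK, hKY, hYY, hYtY, hy, star_ofNat]
  ring

end HilbertSchmidt

section SkewNorm

variable {𝕜 m n : Type*} [RCLike 𝕜] [Fintype m] [Fintype n]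

lemma trace_conjTranspose_mul_self_nonneg (A : Matrix m n 𝕜) : 0 ≤ (Aᴴ * A).trace :=
  (posSemidef_conjTranspose_mul_self A).trace_nonneg

lemma two_mul_star_mulVec_dotProduct_le {K : Matrix m m 𝕜} (hK : Kᵀ = -K) (x : m → 𝕜) :
    2 * (star (K *ᵥ x) ⬝ᵥ K *ᵥ x) ≤ (star x ⬝ᵥ x) * (Kᴴ * K).trace := by
  obtain rfl | hx := eq_or_ne x 0
  · simp
  have hN : 0 < star x ⬝ᵥ x := dotProduct_star_self_pos_iff.mpr hx
  have h := (trace_conjTranspose_mul_self_nonneg _).trans_eq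
    (trace_conjTranspose_mul_self_smul_sub_wedge hK x)
  have h' := mul_nonneg (inv_nonneg.mpr hN.le) h
  rw [inv_mul_cancel_left₀ hN.ne'] at h'
  exact sub_nonneg.mp h'

lemma trace_conjTranspose_mul_self_eq_sum (A : Matrix m n 𝕜) :
    (Aᴴ * A).trace = ∑ j, star (A.col j) ⬝ᵥ A.col j := rfl

lemma two_mul_trace_skew_mul_le {K : Matrix m m 𝕜} (hK : Kᵀ = -K) (X : Matrix m n 𝕜) :
    2 * ((K * X)ᴴ * (K * X)).trace ≤ (Xᴴ * X).trace * (Kᴴ * K).trace := by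
  simp only [trace_conjTranspose_mul_self_eq_sum (K * X),
    trace_conjTranspose_mul_self_eq_sum X, Finset.mul_sum, Finset.sum_mul]
  exact Finset.sum_le_sum fun j _ => two_mul_star_mulVec_dotProduct_le hK (X.col j)

end SkewNorm

section Excess

variable {𝕜 m n : Type*} [RCLike 𝕜] [Fintype m] [Fintype n]

/-- If `X` has unit Hilbert-Schmidt norm and is the entrywise conjugate of the matrix of
coefficients of a vector `v`, and `W` is the matrix of coefficients of a vector `w`, this is the
amount by which `⟨v|(|w⟩⟨w|)^Γ|v⟩` exceeds its lower bound `-‖w‖² / 2`. -/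
def excess (X W : Matrix m n 𝕜) : 𝕜 :=
  (Wᴴ * W).trace / 2 + (W * Xᴴ * (W * Xᴴ).map star).trace

lemma excess_eq_add_add (X W : Matrix m n 𝕜) {B K : Matrix m m 𝕜} (hB : B = W * Xᴴ)
    (hK : K = B - Bᵀ) :
    excess X W = ((B + Bᵀ)ᴴ * (B + Bᵀ)).trace / 4 + ((W - K * X)ᴴ * (W - K * X)).trace / 2 +
      ((Kᴴ * K).trace - 2 * ((K * X)ᴴ * (K * X)).trace) / 4 := by
  have hskew : Kᵀ = -K := by rw [hK, transpose_sub_transpose_self]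
  have hKB : (Kᴴ * K).trace = 2 * (Kᴴ * B).trace := by
    rw [← trace_conjTranspose_mul_sub_transpose hskew, ← hK]
  have hKB_real : star (Kᴴ * B).trace = (Kᴴ * B).trace := by
    have hKK := trace_conjTranspose (Kᴴ * K)
    rw [conjTranspose_mul, conjTranspose_conjTranspose, hKB, star_mul', star_ofNat] at hKK
    exact (mul_left_cancel₀ two_ne_zero hKK).symm
  have hWKX : (Wᴴ * (K * X)).trace = (Kᴴ * B).trace := by
    rw [← hKB_real, ← trace_conjTranspose, conjTranspose_mul, conjTranspose_conjTranspose, hB,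
      conjTranspose_mul, conjTranspose_conjTranspose, trace_mul_comm, Matrix.mul_assoc,
      trace_mul_comm, Matrix.mul_assoc]
  have hKK := trace_conjTranspose_mul_self_sub_transpose B
  rw [← hK] at hKK
  have hBB : (B * B.map star).trace = (Bᵀᴴ * B).trace := trace_mul_comm _ _
  rw [excess, ← hB, hBB, trace_conjTranspose_mul_self_sub,
    trace_conjTranspose_mul_self_add_transpose, hWKX, hKB_real]
  linear_combination hKK / 4 - hKB / 2

/-- The structure forced on `W` by equality in the bound `0 ≤ excess X W`. -/
structure IsExtremal (X W : Matrix m n 𝕜) : Prop where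
  skew : (W * Xᴴ)ᵀ = -(W * Xᴴ)
  eq_two_smul : W = (2 : 𝕜) • (W * Xᴴ * X)

variable {X W : Matrix m n 𝕜}

lemma excess_nonneg (hX : (Xᴴ * X).trace = 1) (W : Matrix m n 𝕜) : 0 ≤ excess X W := by
  rw [excess_eq_add_add X W rfl rfl]
  have h := two_mul_trace_skew_mul_le (transpose_sub_transpose_self (W * Xᴴ)) X
  rw [hX, one_mul, ← sub_nonneg] at h
  have := trace_conjTranspose_mul_self_nonneg (W * Xᴴ + (W * Xᴴ)ᵀ)
  have := trace_conjTranspose_mul_self_nonneg (W - (W * Xᴴ - (W * Xᴴ)ᵀ) * X)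
  positivity

lemma isExtremal_of_excess_eq_zero (hX : (Xᴴ * X).trace = 1) (h : excess X W = 0) :
    IsExtremal X W := by
  set B := W * Xᴴ with hB
  have hS := trace_conjTranspose_mul_self_nonneg (B + Bᵀ)
  have hD := trace_conjTranspose_mul_self_nonneg (W - (B - Bᵀ) * X)
  have hK := two_mul_trace_skew_mul_le (transpose_sub_transpose_self B) X
  rw [hX, one_mul, ← sub_nonneg] at hK
  rw [excess_eq_add_add X W hB rfl, add_eq_zero_iff_of_nonneg (by positivity) (by positivity),
    add_eq_zero_iff_of_nonneg (by positivity) (by positivity)] at h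
  obtain ⟨⟨hS0, hD0⟩, -⟩ := h
  have hskew : Bᵀ = -B := eq_neg_of_add_eq_zero_right
    (trace_conjTranspose_mul_self_eq_zero_iff.mp
      ((div_eq_zero_iff.mp hS0).resolve_right four_ne_zero))
  have hW : W = (B - Bᵀ) * X := sub_eq_zero.mp
    (trace_conjTranspose_mul_self_eq_zero_iff.mp
      ((div_eq_zero_iff.mp hD0).resolve_right two_ne_zero))
  refine ⟨hskew, hW.trans ?_⟩
  rw [hskew, sub_neg_eq_add, ← two_smul 𝕜 B, Matrix.smul_mul]

end Excess

section OrthonormalPair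

variable {𝕜 m n : Type*} [RCLike 𝕜]

/-- For an orthonormal pair, the orthogonal projection onto its span. -/
def pairProj (e f : m → 𝕜) : Matrix m m 𝕜 :=
  vecMulVec e (star e) + vecMulVec f (star f)

lemma conjTranspose_pairProj (e f : m → 𝕜) : (pairProj e f)ᴴ = pairProj e f := by
  simp only [pairProj, conjTranspose_add, conjTranspose_vecMulVec, star_star]

variable [Fintype m] [Fintype n]

/-- Two orthonormal vectors, for the inner product `star x ⬝ᵥ y` of plain functions (`Orthonormal`
would require vectors of `EuclideanSpace`). -/
structure IsOrthonormalPair (e f : m → 𝕜) : Prop where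
  left : star e ⬝ᵥ e = 1
  right : star f ⬝ᵥ f = 1
  orthogonal : star e ⬝ᵥ f = 0

namespace IsOrthonormalPair

variable {e f : m → 𝕜}

lemma symm (h : IsOrthonormalPair e f) : IsOrthonormalPair f e :=
  ⟨h.right, h.left, by rw [star_dotProduct, h.orthogonal, star_zero]⟩

lemma conj (h : IsOrthonormalPair e f) : IsOrthonormalPair (star e) (star f) := by
  refine ⟨?_, ?_, ?_⟩ <;> rw [star_star, dotProduct_comm]
  exacts [h.left, h.right, h.symm.orthogonal]

lemma neg_right (h : IsOrthonormalPair e f) : IsOrthonormalPair e (-f) where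
  left := h.left
  right := by rw [star_neg, neg_dotProduct_neg, h.right]
  orthogonal := by rw [dotProduct_neg, h.orthogonal, neg_zero]

lemma pairProj_mul_self (h : IsOrthonormalPair e f) :
    pairProj e f * pairProj e f = pairProj e f := by
  simp only [pairProj, Matrix.mul_add, Matrix.add_mul, vecMulVec_mul_vecMulVec, h.left, h.right,
    h.orthogonal, h.symm.orthogonal, one_smul, zero_smul, vecMulVec_zero, add_zero, zero_add]

lemma trace_pairProj (h : IsOrthonormalPair e f) : (pairProj e f).trace = 2 := by
  rw [pairProj, trace_add, trace_vecMulVec, trace_vecMulVec, dotProduct_comm, h.left,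
    dotProduct_comm, h.right, one_add_one_eq_two]

end IsOrthonormalPair

lemma eq_smul_wedge_of_mul_pairProj_eq_self {B : Matrix m m 𝕜} {e f : m → 𝕜}
    (hB : Bᵀ = -B) (hP : B * pairProj e f = B) :
    B = (e ⬝ᵥ B *ᵥ f) • (vecMulVec (star e) (star f) - vecMulVec (star f) (star e)) := by
  set P := pairProj e f with hP_def
  have hPB : Pᵀ * B = B := by
    rw [← neg_eq_iff_eq_neg.mpr hB, Matrix.mul_neg, ← transpose_mul, hP]
  have hB_apply (x : m → 𝕜) :
      B *ᵥ x = (e ⬝ᵥ B *ᵥ x) • star e + (f ⬝ᵥ B *ᵥ x) • star f := by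
    conv_lhs => rw [← hPB, ← mulVec_mulVec, hP_def, pairProj, transpose_add, transpose_vecMulVec,
      transpose_vecMulVec, add_mulVec, vecMulVec_mulVec, vecMulVec_mulVec]
    simp only [op_smul_eq_smul]
  have hBe : B *ᵥ e = -(e ⬝ᵥ B *ᵥ f) • star f := by
    rw [hB_apply, dotProduct_skew_mulVec_self hB, zero_smul, zero_add,
      dotProduct_skew_mulVec_comm hB f e]
  have hBf : B *ᵥ f = (e ⬝ᵥ B *ᵥ f) • star e := by
    conv_lhs => rw [hB_apply, dotProduct_skew_mulVec_self hB, zero_smul, add_zero]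
  conv_lhs => rw [← hP, hP_def, pairProj, Matrix.mul_add, mul_vecMulVec, mul_vecMulVec, hBf, hBe]
  rw [smul_vecMulVec, smul_vecMulVec, neg_smul, neg_add_eq_sub, ← smul_sub]

lemma exists_smul_star_dotProduct_self_eq_one {v : m → 𝕜} (hv : v ≠ 0) :
    ∃ c : 𝕜, star (c • v) ⬝ᵥ (c • v) = 1 := by
  set u : EuclideanSpace 𝕜 m := WithLp.toLp 2 v
  have hu : ‖(‖u‖⁻¹ : 𝕜) • u‖ = 1 := norm_smul_inv_norm fun h => hv (congrArg WithLp.ofLp h)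
  refine ⟨(‖u‖⁻¹ : 𝕜), ?_⟩
  rw [dotProduct_comm]
  exact (inner_self_eq_norm_sq_to_K ((‖u‖⁻¹ : 𝕜) • u)).trans <| by
    rw [hu, RCLike.ofReal_one, one_pow]

lemma exists_unit_eigenvector {M : Matrix m m 𝕜} {v : m → 𝕜} {μ : 𝕜}
    (hv : v ≠ 0) (h : M *ᵥ v = μ • v) : ∃ u, star u ⬝ᵥ u = 1 ∧ M *ᵥ u = μ • u := by
  obtain ⟨c, hc⟩ := exists_smul_star_dotProduct_self_eq_one hv
  exact ⟨c • v, hc, by rw [mulVec_smul, h, smul_comm]⟩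

lemma exists_isOrthonormalPair_mulVec {C : Matrix m m 𝕜} (hC : Cᵀ = -C) (hC0 : C ≠ 0) :
    ∃ x y, IsOrthonormalPair (C *ᵥ x) (C *ᵥ y) := by
  classical
  obtain ⟨z, hz⟩ : ∃ z, C *ᵥ z ≠ 0 := by
    by_contra! h
    exact hC0 (ext_of_mulVec_single fun j => by rw [h, zero_mulVec])
  have hCz : C *ᵥ star (C *ᵥ z) ≠ 0 := fun h => hz <| by
    rw [← dotProduct_star_self_eq_zero, dotProduct_mulVec, ← mulVec_transpose, hC, neg_mulVec, h,
      neg_zero, zero_dotProduct]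
  obtain ⟨c, hc⟩ := exists_smul_star_dotProduct_self_eq_one hz
  obtain ⟨d, hd⟩ := exists_smul_star_dotProduct_self_eq_one hCz
  refine ⟨c • z, d • star (C *ᵥ z), ?_, ?_, ?_⟩
  · rwa [mulVec_smul]
  · rwa [mulVec_smul]
  · rw [mulVec_smul, mulVec_smul, star_smul, smul_dotProduct, dotProduct_smul,
      dotProduct_skew_mulVec_self hC, smul_zero, smul_zero]

namespace IsOrthonormalPair

lemma pairProj_mul_eq_self {e f : m → 𝕜} (h : IsOrthonormalPair e f)
    {X : Matrix m n 𝕜} (hX : (Xᴴ * X).trace = 1)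
    (he : ((2 : 𝕜) • (X * Xᴴ)) *ᵥ e = e) (hf : ((2 : 𝕜) • (X * Xᴴ)) *ᵥ f = f) :
    pairProj e f * X = X := by
  set P := pairProj e f
  have hXP : (2 : 𝕜) • (X * Xᴴ) * P = P := by
    simp only [P, pairProj, Matrix.mul_add, mul_vecMulVec, he, hf]
  have htr : (Xᴴ * (P * X)).trace = 1 := by
    have h2 := congrArg trace hXP
    rw [Matrix.smul_mul, trace_smul, h.trace_pairProj, smul_eq_mul] at h2
    rw [trace_mul_comm, Matrix.mul_assoc, trace_mul_comm]
    exact mul_left_cancel₀ two_ne_zero (h2.trans (mul_one 2).symm)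
  have hPX : ((P * X)ᴴ * (P * X)).trace = 1 := by
    rw [conjTranspose_mul, conjTranspose_pairProj, Matrix.mul_assoc, ← Matrix.mul_assoc P,
      h.pairProj_mul_self, htr]
  have hzero : ((X - P * X)ᴴ * (X - P * X)).trace = 0 := by
    rw [trace_conjTranspose_mul_self_sub, hX, htr, hPX, star_one]
    ring
  exact (sub_eq_zero.mp (trace_conjTranspose_mul_self_eq_zero_iff.mp hzero)).symm

end IsOrthonormalPair

end OrthonormalPair

section Extremal

variable {𝕜 m n : Type*} [RCLike 𝕜] [Fintype m] [Fintype n] {X W : Matrix m n 𝕜}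

lemma IsExtremal.mul_conjTranspose_eq (h : IsExtremal X W) :
    W * Xᴴ = W * Xᴴ * ((2 : 𝕜) • (X * Xᴴ)) := by
  conv_lhs => rw [h.eq_two_smul]
  rw [Matrix.mul_smul, Matrix.smul_mul, Matrix.mul_assoc (W * Xᴴ)]

lemma IsExtremal.exists_isOrthonormalPair (h : IsExtremal X W) (hW : W ≠ 0) :
    ∃ e f : m → 𝕜, IsOrthonormalPair e f ∧
      ((2 : 𝕜) • (X * Xᴴ)) *ᵥ e = e ∧ ((2 : 𝕜) • (X * Xᴴ)) *ᵥ f = f := by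
  set C := (W * Xᴴ)ᴴ with hC
  have hC_skew : Cᵀ = -C := by
    rw [hC, ← conjTranspose_neg, ← h.skew]; rfl
  have hC0 : C ≠ 0 := fun h0 => hW <| by
    rw [h.eq_two_smul, conjTranspose_eq_zero.mp h0, Matrix.zero_mul, smul_zero]
  have hA : ((2 : 𝕜) • (X * Xᴴ))ᴴ = (2 : 𝕜) • (X * Xᴴ) := by
    rw [conjTranspose_smul, star_ofNat, conjTranspose_mul, conjTranspose_conjTranspose]
  have hC_fix (x : m → 𝕜) : ((2 : 𝕜) • (X * Xᴴ)) *ᵥ (C *ᵥ x) = C *ᵥ x := by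
    rw [mulVec_mulVec, hC, ← hA, ← conjTranspose_mul,
      ← h.mul_conjTranspose_eq]
  obtain ⟨x, y, hxy⟩ := exists_isOrthonormalPair_mulVec hC_skew hC0
  exact ⟨_, _, hxy, hC_fix x, hC_fix y⟩

lemma IsExtremal.eq_smul_add {e f : m → 𝕜} (h : IsExtremal X W) (hX : pairProj e f * X = X) :
    W = (2 * (e ⬝ᵥ (W * Xᴴ) *ᵥ f)) •
      (vecMulVec (star e) (star f ᵥ* X) + vecMulVec (-star f) (star e ᵥ* X)) := by
  have hP : W * Xᴴ * pairProj e f = W * Xᴴ := by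
    rw [Matrix.mul_assoc, ← conjTranspose_pairProj, ← conjTranspose_mul, hX]
  conv_lhs => rw [h.eq_two_smul, eq_smul_wedge_of_mul_pairProj_eq_self h.skew hP]
  rw [Matrix.smul_mul, Matrix.sub_mul, vecMulVec_mul, vecMulVec_mul, smul_smul, neg_vecMulVec,
    sub_eq_add_neg]

lemma IsOrthonormalPair.sqrt_two_smul_star_vecMul {e f : m → 𝕜} (h : IsOrthonormalPair e f)
    (he : ((2 : 𝕜) • (X * Xᴴ)) *ᵥ e = e) (hf : ((2 : 𝕜) • (X * Xᴴ)) *ᵥ f = f) :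
    IsOrthonormalPair (((√2 : ℝ) : 𝕜) • (star e ᵥ* X)) (((√2 : ℝ) : 𝕜) • (star f ᵥ* X)) := by
  have hinner {x : m → 𝕜} (y : m → 𝕜) (hx : ((2 : 𝕜) • (X * Xᴴ)) *ᵥ x = x) :
      star (((√2 : ℝ) : 𝕜) • (star x ᵥ* X)) ⬝ᵥ (((√2 : ℝ) : 𝕜) • (star y ᵥ* X)) =
        star y ⬝ᵥ x := by
    have hsqrt : ((√2 : ℝ) : 𝕜) * (√2 : ℝ) = 2 := by
      rw [← RCLike.ofReal_mul, Real.mul_self_sqrt zero_le_two, RCLike.ofReal_ofNat]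
    conv_rhs => rw [← hx, smul_mulVec, dotProduct_smul, ← mulVec_mulVec, dotProduct_mulVec,
      dotProduct_comm]
    rw [star_smul, RCLike.star_def, RCLike.conj_ofReal, smul_dotProduct, dotProduct_smul,
      smul_smul, hsqrt, star_vecMul, star_star]
  exact ⟨(hinner e he).trans h.left, (hinner f hf).trans h.right,
    (hinner f he).trans h.symm.orthogonal⟩

lemma IsExtremal.exists_isOrthonormalPair_forall_eq_smul
    (hX : (Xᴴ * X).trace = 1) (h : IsExtremal X W)
    (hW : W ≠ 0) :
    ∃ (a₀ a₁ : m → 𝕜) (b₀ b₁ : n → 𝕜), IsOrthonormalPair a₀ a₁ ∧ IsOrthonormalPair b₀ b₁ ∧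
      ∀ W', IsExtremal X W' → ∃ t : 𝕜, W' = t • (vecMulVec a₀ b₀ + vecMulVec a₁ b₁) := by
  obtain ⟨e, f, hef, he, hf⟩ := h.exists_isOrthonormalPair hW
  refine ⟨star e, -star f, _, _, hef.conj.neg_right, hef.symm.sqrt_two_smul_star_vecMul hf he,
    fun W' hW' => ⟨2 * (e ⬝ᵥ (W' * Xᴴ) *ᵥ f) * ((√2 : ℝ) : 𝕜)⁻¹, ?_⟩⟩
  have hsqrt : ((√2 : ℝ) : 𝕜) ≠ 0 := RCLike.ofReal_ne_zero.mpr (Real.sqrt_ne_zero'.mpr two_pos)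
  rw [vecMulVec_smul, vecMulVec_smul, ← smul_add, smul_smul, inv_mul_cancel_right₀ hsqrt]
  exact hW'.eq_smul_add (hef.pairProj_mul_eq_self hX he hf)

end Extremal

section PartialTranspose

/-- The matrix of coefficients of a vector of a tensor product, indexed by the two factors. -/
def coeffMatrix {R m n : Type*} (v : m × n → R) : Matrix m n R :=
  Matrix.of (Function.curry v)

lemma coeffMatrix_injective {R m n : Type*} :
    Function.Injective (coeffMatrix : (m × n → R) → Matrix m n R) :=
  Matrix.of.injective.comp Function.curry_injective

lemma coeffMatrix_neg {R m n : Type*} [Neg R] (v : m × n → R) :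
    coeffMatrix (-v) = -coeffMatrix v := rfl

lemma star_dotProduct_eq_trace_coeffMatrix {R m n : Type*} [NonUnitalNonAssocSemiring R] [Star R]
    [Fintype m] [Fintype n] (u v : m × n → R) :
    star u ⬝ᵥ v = ((coeffMatrix u)ᴴ * coeffMatrix v).trace :=
  Fintype.sum_prod_type_right _

variable {m n : ℕ}

lemma coeffMatrix_ptranspose_vecMulVec_mulVec (w v : Fin m × Fin n → ℂ) :
    coeffMatrix (ptranspose (vecMulVec w (star w)) *ᵥ v) =
      coeffMatrix w * (coeffMatrix v)ᵀ * coeffMatrix (star w) := by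
  ext i j
  simp only [mul_apply, Finset.sum_mul]
  refine (Fintype.sum_prod_type _).trans (Finset.sum_congr rfl fun k _ =>
    Finset.sum_congr rfl fun l _ => ?_)
  exact mul_right_comm (w (i, l)) (star (w (k, j))) (v (k, l))

lemma half_add_star_dotProduct_ptranspose_mulVec (w v : Fin m × Fin n → ℂ) :
    (star w ⬝ᵥ w) / 2 + star v ⬝ᵥ ptranspose (vecMulVec w (star w)) *ᵥ v =
      excess (coeffMatrix (star v)) (coeffMatrix w) := by
  have hstar : (coeffMatrix (star v))ᴴ = (coeffMatrix v)ᵀ := by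
    ext i j
    exact star_star _
  have hmap : (coeffMatrix w * (coeffMatrix v)ᵀ).map star =
      coeffMatrix (star w) * (coeffMatrix v)ᴴ := Matrix.map_mul (f := starRingEnd ℂ)
  rw [excess, hstar, hmap, star_dotProduct_eq_trace_coeffMatrix w,
    star_dotProduct_eq_trace_coeffMatrix v, coeffMatrix_ptranspose_vecMulVec_mulVec,
    trace_mul_comm (coeffMatrix v)ᴴ, Matrix.mul_assoc _ (coeffMatrix (star w))]

lemma ptranspose_sum {ι : Type*} [Fintype ι]
    (M : ι → Matrix (Fin m × Fin n) (Fin m × Fin n) ℂ) :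
    ptranspose (∑ k, M k) = ∑ k, ptranspose (M k) := by
  ext p q
  simp only [ptranspose, of_apply, Matrix.sum_apply]

lemma ptranspose_smul (c : ℂ) (M : Matrix (Fin m × Fin n) (Fin m × Fin n) ℂ) :
    ptranspose (c • M) = c • ptranspose M := rfl

lemma sum_excess_coeffMatrix_eq {ι : Type*} [Fintype ι] (w : ι → Fin m × Fin n → ℂ)
    (v : Fin m × Fin n → ℂ) :
    ∑ k, excess (coeffMatrix (star v)) (coeffMatrix (w k)) =
      (∑ k, vecMulVec (w k) (star (w k))).trace / 2 +
        star v ⬝ᵥ ptranspose (∑ k, vecMulVec (w k) (star (w k))) *ᵥ v := by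
  simp only [← half_add_star_dotProduct_ptranspose_mulVec, ptranspose_sum, sum_mulVec,
    dotProduct_sum, trace_sum, trace_vecMulVec, Finset.sum_add_distrib, Finset.sum_div,
    dotProduct_comm (w _) (star (w _))]

variable {ρ : Matrix (Fin m × Fin n) (Fin m × Fin n) ℂ} {v : Fin m × Fin n → ℂ}

lemma exists_sum_excess_eq_half_add (hρ : ρ.PosSemidef) (htr : ρ.trace = 1) {μ : ℂ}
    (hv : v ≠ 0) (h : ptranspose ρ *ᵥ v = μ • v) :
    ∃ (N : ℕ) (w : Fin N → Fin m × Fin n → ℂ) (X : Matrix (Fin m) (Fin n) ℂ),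
      ρ = ∑ k, vecMulVec (w k) (star (w k)) ∧ (Xᴴ * X).trace = 1 ∧
        ∑ k, excess X (coeffMatrix (w k)) = 1 / 2 + μ := by
  obtain ⟨N, w, hw⟩ := posSemidef_iff_eq_sum_vecMulVec.mp hρ
  obtain ⟨u, hu, hμ⟩ := exists_unit_eigenvector hv h
  refine ⟨N, w, coeffMatrix (star u), hw, ?_, ?_⟩
  · rw [← star_dotProduct_eq_trace_coeffMatrix, star_star, dotProduct_comm, hu]
  · rw [sum_excess_coeffMatrix_eq, ← hw, htr, hμ, dotProduct_smul, hu, smul_eq_mul, mul_one]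

theorem neg_half_le_of_ptranspose_mulVec_eq_smul (hρ : ρ.PosSemidef) (htr : ρ.trace = 1) {μ : ℝ}
    (hv : v ≠ 0) (h : ptranspose ρ *ᵥ v = (μ : ℂ) • v) : -(1 / 2) ≤ μ := by
  obtain ⟨N, w, X, -, hX, hsum⟩ := exists_sum_excess_eq_half_add hρ htr hv h
  have hnonneg : (0 : ℂ) ≤ ((1 / 2 + μ : ℝ) : ℂ) := by
    push_cast
    rw [← hsum]
    exact Finset.sum_nonneg fun k _ => excess_nonneg hX _
  linarith [Complex.zero_le_real.mp hnonneg]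

/-- The vector `a₀ ⊗ b₀ + a₁ ⊗ b₁`, which for orthonormal pairs is a two-qubit maximally entangled
vector of squared norm `2`. -/
def bellVec (a₀ a₁ : Fin m → ℂ) (b₀ b₁ : Fin n → ℂ) : Fin m × Fin n → ℂ :=
  prodVec a₀ b₀ + prodVec a₁ b₁

lemma coeffMatrix_bellVec (a₀ a₁ : Fin m → ℂ) (b₀ b₁ : Fin n → ℂ) :
    coeffMatrix (bellVec a₀ a₁ b₀ b₁) = vecMulVec a₀ b₀ + vecMulVec a₁ b₁ := rfl

lemma star_bellVec (a₀ a₁ : Fin m → ℂ) (b₀ b₁ : Fin n → ℂ) :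
    star (bellVec a₀ a₁ b₀ b₁) = bellVec (star a₀) (star a₁) (star b₀) (star b₁) := by
  ext p
  simp only [bellVec, prodVec, Pi.star_apply, Pi.add_apply, star_add, star_mul']

lemma vecMulVec_smul_star_smul {R ι : Type*} [CommSemiring R] [StarRing R] (c : R) (w : ι → R) :
    vecMulVec (c • w) (star (c • w)) = (c * star c) • vecMulVec w (star w) := by
  rw [star_smul, vecMulVec_smul, smul_vecMulVec, smul_smul, mul_comm]

lemma vecMulVec_inv_sqrt_two_smul {ι : Type*} (w : ι → ℂ) :
    vecMulVec ((((√2)⁻¹ : ℝ) : ℂ) • w) (star ((((√2)⁻¹ : ℝ) : ℂ) • w)) =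
      (1 / 2 : ℂ) • vecMulVec w (star w) := by
  rw [vecMulVec_smul_star_smul, Complex.star_def, Complex.conj_ofReal, ← Complex.ofReal_mul,
    ← mul_inv, Real.mul_self_sqrt zero_le_two, Complex.ofReal_inv, Complex.ofReal_ofNat, one_div]

section Bell

variable {a₀ a₁ : Fin m → ℂ} {b₀ b₁ : Fin n → ℂ}

lemma star_bellVec_dotProduct_self (ha : IsOrthonormalPair a₀ a₁) (hb : IsOrthonormalPair b₀ b₁) :
    star (bellVec a₀ a₁ b₀ b₁) ⬝ᵥ bellVec a₀ a₁ b₀ b₁ = 2 := by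
  rw [star_dotProduct_eq_trace_coeffMatrix, coeffMatrix_bellVec]
  simp only [conjTranspose_add, conjTranspose_vecMulVec, Matrix.add_mul, Matrix.mul_add,
    vecMulVec_mul_vecMulVec, ha.left, ha.right, ha.orthogonal, ha.symm.orthogonal, one_smul,
    zero_smul, vecMulVec_zero, add_zero, zero_add, trace_add, trace_vecMulVec, hb.left, hb.right,
    one_add_one_eq_two]

theorem exists_ptranspose_bellVec_mulVec (ha : IsOrthonormalPair a₀ a₁)
    (hb : IsOrthonormalPair b₀ b₁) :
    ∃ v, v ≠ 0 ∧ ptranspose (vecMulVec (bellVec a₀ a₁ b₀ b₁) (star (bellVec a₀ a₁ b₀ b₁))) *ᵥ v =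
      -v := by
  set u := bellVec a₀ a₁ (star b₁) (-star b₀)
  have hu : star u ⬝ᵥ u = 2 := star_bellVec_dotProduct_self ha hb.symm.conj.neg_right
  refine ⟨u, fun h0 => two_ne_zero (hu.symm.trans (by rw [h0, dotProduct_zero])),
    coeffMatrix_injective ?_⟩
  have hwedge : (vecMulVec a₀ b₀ + vecMulVec a₁ b₁) * (coeffMatrix u)ᵀ =
      vecMulVec a₁ a₀ - vecMulVec a₀ a₁ := by
    simp only [u, coeffMatrix_bellVec, transpose_add, transpose_vecMulVec, Matrix.mul_add,
      Matrix.add_mul, vecMulVec_mul_vecMulVec, dotProduct_comm b₀, dotProduct_comm b₁,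
      transpose_neg, Matrix.mul_neg, hb.left, hb.right, hb.orthogonal, hb.symm.orthogonal, one_smul,
      zero_smul, vecMulVec_neg, vecMulVec_zero, add_zero, zero_add]
    rw [← sub_eq_add_neg]
  rw [coeffMatrix_ptranspose_vecMulVec_mulVec, coeffMatrix_neg, star_bellVec, coeffMatrix_bellVec,
    hwedge]
  simp only [u, coeffMatrix_bellVec, Matrix.mul_add, Matrix.sub_mul, vecMulVec_mul_vecMulVec,
    vecMulVec_smul, vecMulVec_neg]
  simp only [dotProduct_comm a₀, dotProduct_comm a₁, ha.left, ha.right, ha.orthogonal,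
    ha.symm.orthogonal, one_smul, zero_smul, sub_zero, zero_sub]
  rw [← sub_eq_add_neg, ← sub_eq_add_neg, neg_sub]

end Bell

theorem exists_eq_half_smul_vecMulVec_bellVec (hρ : ρ.PosSemidef) (htr : ρ.trace = 1)
    (hv : v ≠ 0) (h : ptranspose ρ *ᵥ v = (-(1 / 2) : ℂ) • v) :
    ∃ (a₀ a₁ : Fin m → ℂ) (b₀ b₁ : Fin n → ℂ), IsOrthonormalPair a₀ a₁ ∧ IsOrthonormalPair b₀ b₁ ∧
      ρ = (1 / 2 : ℂ) • vecMulVec (bellVec a₀ a₁ b₀ b₁) (star (bellVec a₀ a₁ b₀ b₁)) := by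
  obtain ⟨N, w, X, hw, hX, hsum⟩ := exists_sum_excess_eq_half_add hρ htr hv h
  rw [add_neg_cancel, Finset.sum_eq_zero_iff_of_nonneg fun k _ => excess_nonneg hX _] at hsum
  have hext (k : Fin N) : IsExtremal X (coeffMatrix (w k)) :=
    isExtremal_of_excess_eq_zero hX (hsum k (Finset.mem_univ k))
  obtain ⟨k, hk⟩ : ∃ k, coeffMatrix (w k) ≠ 0 := by
    by_contra! h0
    have hw0 (k) : w k = 0 := coeffMatrix_injective (h0 k)
    simp only [hw0, zero_vecMulVec, Finset.sum_const_zero] at hw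
    rw [hw, trace_zero] at htr
    exact zero_ne_one htr
  obtain ⟨a₀, a₁, b₀, b₁, ha, hb, hall⟩ := (hext k).exists_isOrthonormalPair_forall_eq_smul hX hk
  choose t ht using fun k => hall _ (hext k)
  have hwt (k) : w k = t k • bellVec a₀ a₁ b₀ b₁ := coeffMatrix_injective (ht k)
  simp only [hwt, vecMulVec_smul_star_smul, ← Finset.sum_smul] at hw
  refine ⟨a₀, a₁, b₀, b₁, ha, hb, hw.trans ?_⟩
  rw [hw, trace_smul, trace_vecMulVec, dotProduct_comm, star_bellVec_dotProduct_self ha hb] at htr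
  rw [eq_one_div_of_mul_eq_one_left htr]

end PartialTranspose

/-- Every eigenvalue of the partial transpose of a normalized state is
`≥ -1/2`, and `-1/2` is attained iff the state is a two-qubit maximally
entangled pure state. -/
theorem stmt17 {m n : ℕ} (ρ : Matrix (Fin m × Fin n) (Fin m × Fin n) ℂ)
    (hρ : ρ.PosSemidef) (htr : ρ.trace = 1) :
    (∀ μ : ℝ, (∃ v : Fin m × Fin n → ℂ, v ≠ 0 ∧ ptranspose ρ *ᵥ v = (μ : ℂ) • v) →
      -(1/2 : ℝ) ≤ μ) ∧
    ((∃ v : Fin m × Fin n → ℂ, v ≠ 0 ∧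
        ptranspose ρ *ᵥ v = ((-(1/2 : ℝ) : ℝ) : ℂ) • v) ↔
      ∃ (a₀ a₁ : Fin m → ℂ) (b₀ b₁ : Fin n → ℂ),
        star a₀ ⬝ᵥ a₀ = 1 ∧ star a₁ ⬝ᵥ a₁ = 1 ∧ star a₀ ⬝ᵥ a₁ = 0 ∧
        star b₀ ⬝ᵥ b₀ = 1 ∧ star b₁ ⬝ᵥ b₁ = 1 ∧ star b₀ ⬝ᵥ b₁ = 0 ∧
        ρ = Matrix.vecMulVec
          ((((Real.sqrt 2)⁻¹ : ℝ) : ℂ) • (prodVec a₀ b₀ + prodVec a₁ b₁))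
          (star ((((Real.sqrt 2)⁻¹ : ℝ) : ℂ) • (prodVec a₀ b₀ + prodVec a₁ b₁)))) := by
  have hcast : ((-(1 / 2 : ℝ) : ℝ) : ℂ) = -(1 / 2) := by push_cast; rfl
  refine ⟨fun μ ⟨v, hv, h⟩ => neg_half_le_of_ptranspose_mulVec_eq_smul hρ htr hv h, ?_, ?_⟩
  · rintro ⟨v, hv, h⟩
    rw [hcast] at h
    obtain ⟨a₀, a₁, b₀, b₁, ha, hb, hψ⟩ := exists_eq_half_smul_vecMulVec_bellVec hρ htr hv h
    exact ⟨a₀, a₁, b₀, b₁, ha.left, ha.right, ha.orthogonal, hb.left, hb.right, hb.orthogonal,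
      hψ.trans (vecMulVec_inv_sqrt_two_smul _).symm⟩
  · rintro ⟨a₀, a₁, b₀, b₁, ha₀, ha₁, ha, hb₀, hb₁, hb, hψ⟩
    obtain ⟨v, hv, h⟩ := exists_ptranspose_bellVec_mulVec ⟨ha₀, ha₁, ha⟩ ⟨hb₀, hb₁, hb⟩
    have hρ_bell : ρ = (1 / 2 : ℂ) • vecMulVec (bellVec a₀ a₁ b₀ b₁) (star (bellVec a₀ a₁ b₀ b₁)) :=
      hψ.trans (vecMulVec_inv_sqrt_two_smul _)
    refine ⟨v, hv, ?_⟩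
    rw [hρ_bell, ptranspose_smul, smul_mulVec, h, hcast, smul_neg, neg_smul]
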